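/- arXiv:2211.03751 — 5 statements merged into one kernel-verified Lean document; each statement's English description precedes it below -/
import Mathlib

section
/- Let A ∈ ℂ^{p×p} be a nonzero positive semidefinite matrix, let 1 ≤ q ≤ p, set α = q/p, and let λ > 0. Suppose μ > 0 satisfies the fixed-point equation λ = μ(1 − (1/q) tr[A (A + μ I_p)⁻¹]) and γ > 0 satisfies (1/p) tr[(A + γ I_p)⁻¹] · (γ − αλ) = 1 − α. Then γ < μ. (That is, the effective regularization induced by an orthogonal sketch is strictly smaller than that induced by an i.i.d. sketch with the same sketch size and explicit regularization.) -/
open Matrix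
open scoped ComplexOrder

/-!
Let `a i ≥ 0` be the eigenvalues of `A`, `p` its size, `α = q / p` and `c = α * lam`. The function
`g x = tr (A + x)⁻¹ * (x - c) = ∑ i, (x - c) / (a i + x)` is monotone on `x > 0`, since each summand
is `1 - (a i + c) / (a i + x)`. The orthogonal equation says `g γ / p = 1 - α`. With
`t = μ * tr (A + μ)⁻¹ / p`, the i.i.d. equation reads `c = μ * (t - (1 - α))`, whence
`g μ / p = (1 - α) + (1 - t) * c / μ`. As `A ≠ 0` forces `t < 1`, this gives `g γ < g μ`, so
`γ < μ`.
-/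

theorem monotoneOn_sub_div_add {K : Type*} [Field K] [LinearOrder K] [IsStrictOrderedRing K]
    {a c : K} (h : 0 ≤ a + c) : MonotoneOn (fun x ↦ (x - c) / (a + x)) (Set.Ioi (-a)) := by
  have pos_add {x : K} (hx : x ∈ Set.Ioi (-a)) : 0 < a + x := neg_lt_iff_pos_add'.1 hx
  have eq_one_sub {x : K} (hx : x ∈ Set.Ioi (-a)) : (x - c) / (a + x) = 1 - (a + c) / (a + x) := by
    rw [eq_sub_iff_add_eq, ← add_div, div_eq_one_iff_eq (pos_add hx).ne']
    ring
  intro x hx y hy hxy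
  simp only [eq_one_sub hx, eq_one_sub hy]
  have := pos_add hx
  gcongr

theorem mul_inv_add_smul_one {n R : Type*} [Fintype n] [DecidableEq n] [CommRing R]
    {A : Matrix n n R} {x : R} (h : IsUnit (A + x • 1)) :
    A * (A + x • 1)⁻¹ = 1 - x • (A + x • 1)⁻¹ := by
  rw [eq_sub_iff_add_eq, ← smul_one_mul x (A + x • 1)⁻¹, ← add_mul,
    mul_nonsing_inv _ ((isUnit_iff_isUnit_det _).1 h)]

theorem posDef_add_smul_one {n 𝕜 : Type*} [DecidableEq n] [RCLike 𝕜] {A : Matrix n n 𝕜} {x : ℝ}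
    (hA : A.PosSemidef) (hx : 0 < x) : (A + (x : 𝕜) • 1).PosDef :=
  PosDef.posSemidef_add hA (PosDef.one.smul (RCLike.ofReal_pos.2 hx))

section ResolventTrace

variable {n 𝕜 : Type*} [Fintype n] [DecidableEq n] [RCLike 𝕜] {A : Matrix n n 𝕜} {x c : ℝ}

/-- The trace of the resolvent of `A` at `-x`, the quantity through which both sketching equations
depend on `A`. It is encoded by its real part: the trace is real when `A` is Hermitian. -/
noncomputable def resolventTrace (A : Matrix n n 𝕜) (x : ℝ) : ℝ :=
  RCLike.re (A + (x : 𝕜) • 1)⁻¹.trace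

theorem inv_add_smul_one_eq_conj_diagonal (hA : A.IsHermitian)
    (hx : ∀ i, hA.eigenvalues i + x ≠ 0) :
    (A + (x : 𝕜) • 1)⁻¹ = Unitary.conjStarAlgAut 𝕜 _ hA.eigenvectorUnitary
      (diagonal fun i ↦ (((hA.eigenvalues i + x)⁻¹ : ℝ) : 𝕜)) := by
  set φ := Unitary.conjStarAlgAut 𝕜 _ hA.eigenvectorUnitary
  have add_smul_one : A + (x : 𝕜) • 1 = φ (diagonal fun i ↦ ((hA.eigenvalues i + x : ℝ) : 𝕜)) := by
    have : (diagonal fun i ↦ ((hA.eigenvalues i + x : ℝ) : 𝕜)) =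
        diagonal (RCLike.ofReal ∘ hA.eigenvalues) + (x : 𝕜) • 1 := by
      rw [smul_one_eq_diagonal, diagonal_add]
      simp only [RCLike.ofReal_add, Function.comp_apply]
    rw [this, map_add, map_smul, map_one, ← hA.spectral_theorem]
  refine inv_eq_right_inv ?_
  rw [add_smul_one, ← map_mul, diagonal_mul_diagonal]
  simp only [← RCLike.ofReal_mul, mul_inv_cancel₀ (hx _), diagonal_one, map_one]

theorem resolventTrace_eq_sum (hA : A.IsHermitian) (hx : ∀ i, hA.eigenvalues i + x ≠ 0) :
    resolventTrace A x = ∑ i, (hA.eigenvalues i + x)⁻¹ := by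
  rw [resolventTrace, inv_add_smul_one_eq_conj_diagonal hA hx, Unitary.conjStarAlgAut_apply,
    trace_mul_cycle, Unitary.coe_star_mul_self, one_mul, trace_diagonal]
  simp only [map_sum, RCLike.ofReal_re]

theorem eigenvalues_add_pos (hA : A.PosSemidef) (hx : 0 < x) (i : n) :
    0 < hA.1.eigenvalues i + x :=
  add_pos_of_nonneg_of_pos (hA.eigenvalues_nonneg i) hx

theorem monotoneOn_resolventTrace_mul_sub (hA : A.PosSemidef) (hc : 0 ≤ c) :
    MonotoneOn (fun x ↦ resolventTrace A x * (x - c)) (Set.Ioi 0) := by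
  have eq_sum {x : ℝ} (hx : 0 < x) :
      resolventTrace A x * (x - c) = ∑ i, (x - c) / (hA.1.eigenvalues i + x) := by
    rw [resolventTrace_eq_sum hA.1 fun i ↦ (eigenvalues_add_pos hA hx i).ne', Finset.sum_mul]
    simp only [inv_mul_eq_div]
  intro x hx y hy hxy
  simp only [eq_sum hx, eq_sum hy]
  refine Finset.sum_le_sum fun i _ ↦ ?_
  exact monotoneOn_sub_div_add (add_nonneg (hA.eigenvalues_nonneg i) hc)
    (neg_lt_iff_pos_add'.2 (eigenvalues_add_pos hA hx i))
    (neg_lt_iff_pos_add'.2 (eigenvalues_add_pos hA hy i)) hxy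

theorem re_trace_mul_inv_add_smul_one (h : IsUnit (A + (x : 𝕜) • 1)) :
    RCLike.re (A * (A + (x : 𝕜) • 1)⁻¹).trace = Fintype.card n - x * resolventTrace A x := by
  rw [mul_inv_add_smul_one h, trace_sub, trace_smul, trace_one, smul_eq_mul, map_sub,
    RCLike.re_ofReal_mul, RCLike.natCast_re, resolventTrace]

theorem mul_resolventTrace_lt_card (hA : A.PosSemidef) (hA0 : A ≠ 0) (hx : 0 < x) :
    x * resolventTrace A x < Fintype.card n := by
  have ha := hA.eigenvalues_nonneg
  have hpos := eigenvalues_add_pos hA hx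
  obtain ⟨j, hj⟩ : ∃ j, hA.1.eigenvalues j ≠ 0 :=
    Function.ne_iff.1 (hA.1.eigenvalues_eq_zero_iff.not.2 hA0)
  calc x * resolventTrace A x
      = ∑ i, x / (hA.1.eigenvalues i + x) := by
        simp only [resolventTrace_eq_sum hA.1 fun i ↦ (hpos i).ne', Finset.mul_sum, div_eq_mul_inv]
    _ < ∑ _i : n, 1 := by
        refine Finset.sum_lt_sum (fun i _ ↦ ?_) ⟨j, Finset.mem_univ j, ?_⟩
        · exact div_le_one_of_le₀ (le_add_of_nonneg_left (ha i)) (hpos i).le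
        · exact (div_lt_one (hpos j)).2 (lt_add_of_pos_left x ((ha j).lt_of_ne' hj))
    _ = Fintype.card n := by rw [Finset.sum_const, nsmul_one, Finset.card_univ]

end ResolventTrace

theorem one_sub_div_lt_of_iid_fixedPoint {K : Type*} [Field K] [LinearOrder K]
    [IsStrictOrderedRing K] {p q lam μ T : K} (hp : 0 < p) (hq : 0 < q) (hlam : 0 < lam)
    (hμ : 0 < μ) (hT : μ * T < p) (h : lam = μ * (1 - q⁻¹ * (p - μ * T))) :
    1 - q / p < p⁻¹ * T * (μ - q / p * lam) := by
  have gap : p⁻¹ * T * (μ - q / p * lam) - (1 - q / p) =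
      (1 - μ * T / p) * (q / p * (lam / μ)) := by
    rw [h]
    field_simp
    ring
  have : 0 < 1 - μ * T / p := sub_pos.2 ((div_lt_one hp).2 hT)
  exact sub_pos.1 (gap ▸ by positivity)

theorem stmt5_general {n 𝕜 : Type*} [Fintype n] [DecidableEq n] [RCLike 𝕜] {A : Matrix n n 𝕜}
    (hA : A.PosSemidef) (hA0 : A ≠ 0) {q lam μ γ : ℝ} (hq : 0 < q) (hlam : 0 < lam) (hμ : 0 < μ)
    (hγ : 0 < γ) (hμeq : lam = μ * (1 - q⁻¹ * RCLike.re (A * (A + (μ : 𝕜) • 1)⁻¹).trace))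
    (hγeq : (Fintype.card n : ℝ)⁻¹ * RCLike.re (A + (γ : 𝕜) • 1)⁻¹.trace *
      (γ - q / Fintype.card n * lam) = 1 - q / Fintype.card n) :
    γ < μ := by
  have hT := mul_resolventTrace_lt_card hA hA0 hμ
  have : Nonempty n := not_isEmpty_iff.1 fun _ ↦ hA0 (Subsingleton.elim A 0)
  have hp : (0 : ℝ) < Fintype.card n := Nat.cast_pos.2 Fintype.card_pos
  rw [re_trace_mul_inv_add_smul_one (posDef_add_smul_one hA hμ).isUnit] at hμeq
  have hlt := hγeq.trans_lt (one_sub_div_lt_of_iid_fixedPoint hp hq hlam hμ hT hμeq)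
  rw [mul_assoc, mul_assoc, mul_lt_mul_iff_right₀ (inv_pos.2 hp)] at hlt
  exact (monotoneOn_resolventTrace_mul_sub hA (by positivity)).reflect_lt hγ hμ hlt

/-- Comparison of the effective regularization of i.i.d. and orthogonal sketching
(Corollary 6.3, last part): if `μ > 0` solves the i.i.d. sketching fixed-point equation
`λ = μ (1 - (1/q) tr[A (A + μ I)⁻¹])` and `γ > 0` solves the orthogonal sketching
fixed-point equation `(1/p) tr[(A + γ I)⁻¹] (γ - α λ) = 1 - α` with `α = q/p`,
then `γ < μ`. -/
theorem stmt5 {p : ℕ} (A : Matrix (Fin p) (Fin p) ℂ)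
    (hA : A.PosSemidef) (hA0 : A ≠ 0)
    (q : ℕ) (hq1 : 1 ≤ q) (hqp : q ≤ p)
    (lam : ℝ) (hlam : 0 < lam)
    (μ γ : ℝ) (hμpos : 0 < μ) (hγpos : 0 < γ)
    (hμeq : lam = μ * (1 - (q : ℝ)⁻¹ * (Matrix.trace (A * (A + (μ : ℂ) • 1)⁻¹)).re))
    (hγeq : (p : ℝ)⁻¹ * (Matrix.trace ((A + (γ : ℂ) • 1)⁻¹)).re * (γ - (q : ℝ) / p * lam)
        = 1 - (q : ℝ) / p) :
    γ < μ := by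
  exact stmt5_general hA hA0 (q := q) (Nat.cast_pos.2 hq1) hlam hμpos hγpos hμeq
    ((Fintype.card_fin p).symm ▸ hγeq)
end

section
/- Let A ∈ ℂ^{p×p} be a nonzero positive semidefinite matrix. The function f(μ) = (1/p) Σ_{i: λ_i(A)>0} λ_i(A)² / (λ_i(A) + μ)² is strictly decreasing on the interval (−λ_min⁺(A), ∞), with f(μ) → ∞ as μ ↘ −λ_min⁺(A) and f(μ) → 0 as μ → ∞. Consequently, for every α > 0 there is a unique μ₀(α) ∈ (−λ_min⁺(A), ∞) with f(μ₀(α)) = α; the map α ↦ μ₀(α) is strictly decreasing, μ₀(α) → ∞ as α ↘ 0, and μ₀(α) → −λ_min⁺(A) as α → ∞. -/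
open Matrix Filter
open scoped ComplexOrder

/-- The smallest positive eigenvalue `λ_min⁺` of a Hermitian matrix. -/
noncomputable def lminp {p : ℕ} {A : Matrix (Fin p) (Fin p) ℂ} (hA : A.IsHermitian) : ℝ :=
  sInf {x : ℝ | 0 < x ∧ ∃ i, hA.eigenvalues i = x}

/-- The spectral sum `Σ_{i : eᵢ > 0} eᵢ / (eᵢ + μ)`; for a positive semidefinite matrix with
eigenvalues `e` and `A + μ I` invertible this equals `tr[A (A + μ I)⁻¹]`. -/
noncomputable def specSum1 {p : ℕ} (e : Fin p → ℝ) (μ : ℝ) : ℝ :=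
  ∑ i, if 0 < e i then e i / (e i + μ) else 0

/-- The spectral sum `Σ_{i : eᵢ > 0} eᵢ² / (eᵢ + μ)²`; for a positive semidefinite matrix with
eigenvalues `e` and `A + μ I` invertible this equals `tr[A² (A + μ I)⁻²]`. -/
noncomputable def specSum2 {p : ℕ} (e : Fin p → ℝ) (μ : ℝ) : ℝ :=
  ∑ i, if 0 < e i then (e i) ^ 2 / (e i + μ) ^ 2 else 0

/-! Each summand `λ² / (λ + μ)²` with `λ > 0` is continuous and strictly decreasing in `μ > -λ`,
vanishes at infinity and blows up at `-λ`. On `(-λ_min⁺, ∞)` all of them are regular, and the one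
with `λ = λ_min⁺` blows up at the endpoint, so `f` decreases continuously from `∞` to `0`.
The claims on `μ₀` hold for the right inverse of any such `f`, because
`μ₀ α < x ↔ f x < α` and `x < μ₀ α ↔ α < f x`. -/

section RightInverse

open Set Topology

variable {X Y : Type*} [LinearOrder X] [LinearOrder Y] {f : X → Y} {g : Y → X} {a : X} {b : Y}

theorem strictAntiOn_of_rightInvOn_of_mapsTo {s : Set X} {t : Set Y} (hf : StrictAntiOn f s)
    (hfg : RightInvOn g f t) (hg : MapsTo g t s) : StrictAntiOn g t := by
  intro y hy z hz hyz
  rwa [← hf.lt_iff_gt (hg hy) (hg hz), hfg hy, hfg hz]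

theorem lt_of_strictAntiOn_Ioi_of_tendsto_atTop [NoMaxOrder X] [TopologicalSpace Y]
    [OrderClosedTopology Y] (hf : StrictAntiOn f (Ioi a)) (hb : Tendsto f atTop (𝓝 b))
    {x : X} (hx : a < x) : b < f x := by
  obtain ⟨x', hxx'⟩ := exists_gt x
  have : Nonempty X := ⟨x⟩
  have hbx' : b ≤ f x' := by
    refine le_of_tendsto hb ?_
    filter_upwards [eventually_ge_atTop x'] with z hz
    exact hf.antitoneOn (hx.trans hxx') ((hx.trans hxx').trans_le hz) hz
  exact hbx'.trans_lt (hf hx (hx.trans hxx') hxx')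

theorem tendsto_nhdsGT_atTop_of_rightInvOn [NoMaxOrder X] [TopologicalSpace Y] [OrderTopology Y]
    (hf : StrictAntiOn f (Ioi a)) (hb : Tendsto f atTop (𝓝 b))
    (hfg : RightInvOn g f (Ioi b)) (hg : MapsTo g (Ioi b) (Ioi a)) :
    Tendsto g (𝓝[>] b) atTop := by
  refine tendsto_atTop.2 fun M ↦ ?_
  have : Nonempty X := ⟨M⟩
  obtain ⟨x, hMx, hax⟩ := ((eventually_ge_atTop M).and (eventually_gt_atTop a)).exists
  filter_upwards [Ioo_mem_nhdsGT (lt_of_strictAntiOn_Ioi_of_tendsto_atTop hf hb hax)]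
    with y ⟨hby, hyx⟩
  have hxg : x < g y := by rwa [← hf.lt_iff_gt (hg hby) hax, hfg hby]
  exact hMx.trans hxg.le

theorem tendsto_atTop_nhds_of_rightInvOn [TopologicalSpace X] [OrderTopology X] [NoMaxOrder Y]
    (hf : StrictAntiOn f (Ioi a)) (hfg : RightInvOn g f (Ioi b)) (hg : MapsTo g (Ioi b) (Ioi a)) :
    Tendsto g atTop (𝓝 a) := by
  refine tendsto_order.2 ⟨fun x hx ↦ ?_, fun x hx ↦ ?_⟩
  · filter_upwards [eventually_gt_atTop b] with y hy
    exact hx.trans (hg hy)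
  · filter_upwards [eventually_gt_atTop b, eventually_gt_atTop (f x)] with y hy hxy
    rwa [← hf.lt_iff_gt hx (hg hy), hfg hy]

end RightInverse

section ExistsUnique

open Set Topology

variable {X Y : Type*}
  [ConditionallyCompleteLinearOrder X] [DenselyOrdered X] [NoMaxOrder X]
  [TopologicalSpace X] [OrderTopology X]
  [LinearOrder Y] [TopologicalSpace Y] [OrderClosedTopology Y]

theorem existsUnique_mem_Ioi_eq_of_strictAntiOn {f : X → Y} {a : X} {b : Y}
    (hf : StrictAntiOn f (Ioi a)) (hc : ContinuousOn f (Ioi a))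
    (ha : Tendsto f (𝓝[>] a) atTop) (hb : Tendsto f atTop (𝓝 b)) {y : Y} (hy : b < y) :
    ∃! x, x ∈ Ioi a ∧ f x = y := by
  obtain ⟨x, hx, hxy⟩ := isPreconnected_Ioi.intermediate_value_Ioi
    (le_principal_iff.2 (Ioi_mem_atTop a)) (le_principal_iff.2 self_mem_nhdsWithin) hc hb ha hy
  exact ⟨x, ⟨hx, hxy⟩, fun z ⟨hz, hzy⟩ ↦ hf.injOn hz hx (hzy.trans hxy.symm)⟩

end ExistsUnique

section Pole

open Set Topology

variable {𝕜 : Type*} [Field 𝕜] [LinearOrder 𝕜] [IsStrictOrderedRing 𝕜] {c : 𝕜} {n : ℕ}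

theorem strictAntiOn_const_div_add_pow (hc : 0 < c) (hn : n ≠ 0) (x : 𝕜) :
    StrictAntiOn (fun μ ↦ c / (x + μ) ^ n) (Ioi (-x)) := by
  intro μ hμ ν _ hμν
  have hxμ : 0 < x + μ := neg_lt_iff_pos_add'.1 hμ
  dsimp only
  gcongr

variable [TopologicalSpace 𝕜] [OrderTopology 𝕜]

theorem continuousOn_const_div_add_pow (c : 𝕜) (n : ℕ) (x : 𝕜) :
    ContinuousOn (fun μ ↦ c / (x + μ) ^ n) (Ioi (-x)) :=
  continuousOn_const.div (by fun_prop) fun _ hμ ↦ pow_ne_zero n (neg_lt_iff_pos_add'.1 hμ).ne'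

theorem tendsto_const_div_add_pow_nhdsGT (hc : 0 < c) (hn : n ≠ 0) (x : 𝕜) :
    Tendsto (fun μ ↦ c / (x + μ) ^ n) (𝓝[>] (-x)) atTop := by
  have hpow : Tendsto (fun μ ↦ (x + μ) ^ n) (𝓝[>] (-x)) (𝓝[>] 0) := by
    refine tendsto_nhdsWithin_iff.2 ⟨?_, ?_⟩
    · have hcont : Continuous fun μ ↦ (x + μ) ^ n := by fun_prop
      simpa [hn] using (hcont.tendsto (-x)).mono_left nhdsWithin_le_nhds
    · filter_upwards [self_mem_nhdsWithin] with μ hμ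
      exact pow_pos (neg_lt_iff_pos_add'.1 hμ) n
  simpa only [div_eq_mul_inv, Pi.inv_apply] using hpow.inv_tendsto_nhdsGT_zero.const_mul_atTop hc

theorem tendsto_const_div_add_pow_atTop (c : 𝕜) (hn : n ≠ 0) (x : 𝕜) :
    Tendsto (fun μ ↦ c / (x + μ) ^ n) atTop (𝓝 0) :=
  ((tendsto_pow_atTop hn).comp (tendsto_atTop_add_const_left _ x tendsto_id)).const_div_atTop c

end Pole

section SpecSum

open Set Topology

variable {p : ℕ} {e : Fin p → ℝ} {l : ℝ}

theorem specSum2_eq_sum_filter (e : Fin p → ℝ) :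
    specSum2 e = fun μ ↦ ∑ i with 0 < e i, e i ^ 2 / (e i + μ) ^ 2 :=
  funext fun _ ↦ (Finset.sum_filter _ _).symm

theorem sq_div_add_sq_le_specSum2 {j : Fin p} (hj : 0 < e j) (μ : ℝ) :
    e j ^ 2 / (e j + μ) ^ 2 ≤ specSum2 e μ := by
  rw [specSum2_eq_sum_filter]
  exact Finset.single_le_sum (f := fun i ↦ e i ^ 2 / (e i + μ) ^ 2)
    (fun _ _ ↦ by positivity) (by simpa using hj)

theorem strictAntiOn_specSum2 (hne : (Ioi 0 ∩ range e).Nonempty)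
    (hl : l ∈ lowerBounds (Ioi 0 ∩ range e)) : StrictAntiOn (specSum2 e) (Ioi (-l)) := by
  obtain ⟨_, hj, j, rfl⟩ := hne
  rw [specSum2_eq_sum_filter]
  intro μ hμ ν hν hμν
  refine Finset.sum_lt_sum_of_nonempty ⟨j, by simpa using hj⟩ fun i hi ↦ ?_
  have hi : 0 < e i := by simpa using hi
  have hsub : Ioi (-l) ⊆ Ioi (-e i) := Ioi_subset_Ioi (neg_le_neg (hl ⟨hi, i, rfl⟩))
  exact strictAntiOn_const_div_add_pow (pow_pos hi 2) two_ne_zero (e i) (hsub hμ) (hsub hν) hμν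

theorem continuousOn_specSum2 (hl : l ∈ lowerBounds (Ioi 0 ∩ range e)) :
    ContinuousOn (specSum2 e) (Ioi (-l)) := by
  rw [specSum2_eq_sum_filter]
  refine continuousOn_finsetSum _ fun i hi ↦ ?_
  have hi : 0 < e i := by simpa using hi
  exact (continuousOn_const_div_add_pow _ 2 (e i)).mono
    (Ioi_subset_Ioi (neg_le_neg (hl ⟨hi, i, rfl⟩)))

theorem tendsto_specSum2_nhdsGT (hl : l ∈ Ioi 0 ∩ range e) :
    Tendsto (specSum2 e) (𝓝[>] (-l)) atTop := by
  obtain ⟨hj, j, rfl⟩ := hl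
  exact tendsto_atTop_mono (sq_div_add_sq_le_specSum2 hj)
    (tendsto_const_div_add_pow_nhdsGT (pow_pos hj 2) two_ne_zero (e j))

theorem tendsto_specSum2_atTop (e : Fin p → ℝ) : Tendsto (specSum2 e) atTop (𝓝 0) := by
  rw [specSum2_eq_sum_filter]
  simpa only [Finset.sum_const_zero] using tendsto_finsetSum (Finset.univ.filter (0 < e ·))
    fun i _ ↦ tendsto_const_div_add_pow_atTop (e i ^ 2) two_ne_zero (e i)

end SpecSum

section Eigenvalues

theorem isLeast_lminp {p : ℕ} {A : Matrix (Fin p) (Fin p) ℂ} (hA : A.IsHermitian)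
    (hpos : ∃ i, 0 < hA.eigenvalues i) :
    IsLeast (Set.Ioi 0 ∩ Set.range hA.eigenvalues) (lminp hA) := by
  have hfin : (Set.Ioi 0 ∩ Set.range hA.eigenvalues).Finite := (Set.finite_range _).inter_of_right _
  have hne : (Set.Ioi 0 ∩ Set.range hA.eigenvalues).Nonempty :=
    let ⟨i, hi⟩ := hpos; ⟨_, hi, i, rfl⟩
  exact ⟨hne.csInf_mem hfin, fun _ hx ↦ csInf_le hfin.bddBelow hx⟩

theorem exists_eigenvalues_pos_of_posSemidef {𝕜 n : Type*} [RCLike 𝕜] [Fintype n] [DecidableEq n]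
    {A : Matrix n n 𝕜} (hA : A.PosSemidef) (hA0 : A ≠ 0) : ∃ i, 0 < hA.1.eigenvalues i := by
  contrapose! hA0
  exact hA.1.eigenvalues_eq_zero_iff.1 (funext fun i ↦ (hA0 i).antisymm (hA.eigenvalues_nonneg i))

end Eigenvalues

theorem stmt9_general {p : ℕ} {A : Matrix (Fin p) (Fin p) ℂ}
    (hA : A.IsHermitian) (hpos : ∃ i, 0 < hA.eigenvalues i) :
    StrictAntiOn (fun μ : ℝ => (p : ℝ)⁻¹ * specSum2 hA.eigenvalues μ)
      (Set.Ioi (-(lminp hA)))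
    ∧ Tendsto (fun μ : ℝ => (p : ℝ)⁻¹ * specSum2 hA.eigenvalues μ)
        (nhdsWithin (-(lminp hA)) (Set.Ioi (-(lminp hA)))) atTop
    ∧ Tendsto (fun μ : ℝ => (p : ℝ)⁻¹ * specSum2 hA.eigenvalues μ) atTop (nhds 0)
    ∧ (∀ α : ℝ, 0 < α → ∃! μ₀ : ℝ, μ₀ ∈ Set.Ioi (-(lminp hA)) ∧
        (p : ℝ)⁻¹ * specSum2 hA.eigenvalues μ₀ = α)
    ∧ ∀ m : ℝ → ℝ,
        (∀ α : ℝ, 0 < α → m α ∈ Set.Ioi (-(lminp hA)) ∧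
          (p : ℝ)⁻¹ * specSum2 hA.eigenvalues (m α) = α) →
        StrictAntiOn m (Set.Ioi 0)
        ∧ Tendsto m (nhdsWithin 0 (Set.Ioi 0)) atTop
        ∧ Tendsto m atTop (nhds (-(lminp hA))) := by
  have hp : 0 < (p : ℝ)⁻¹ := inv_pos.2 (Nat.cast_pos.2 hpos.choose.pos)
  have hl := isLeast_lminp hA hpos
  have hanti : StrictAntiOn (fun μ ↦ (p : ℝ)⁻¹ * specSum2 hA.eigenvalues μ)
      (Set.Ioi (-(lminp hA))) :=
    (strictMono_mul_left_of_pos hp).comp_strictAntiOn (strictAntiOn_specSum2 hl.nonempty hl.2)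
  have hcont : ContinuousOn (fun μ ↦ (p : ℝ)⁻¹ * specSum2 hA.eigenvalues μ)
      (Set.Ioi (-(lminp hA))) := continuousOn_const.mul (continuousOn_specSum2 hl.2)
  have hpole := (tendsto_specSum2_nhdsGT hl.1).const_mul_atTop hp
  have hzero : Tendsto (fun μ ↦ (p : ℝ)⁻¹ * specSum2 hA.eigenvalues μ) atTop (nhds 0) := by
    simpa only [mul_zero] using (tendsto_specSum2_atTop hA.eigenvalues).const_mul (p : ℝ)⁻¹
  refine ⟨hanti, hpole, hzero,
    fun α hα ↦ existsUnique_mem_Ioi_eq_of_strictAntiOn hanti hcont hpole hzero hα, fun m hm ↦ ?_⟩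
  have hmaps : Set.MapsTo m (Set.Ioi 0) (Set.Ioi (-(lminp hA))) := fun α hα ↦ (hm α hα).1
  have hinv : Set.RightInvOn m (fun μ ↦ (p : ℝ)⁻¹ * specSum2 hA.eigenvalues μ) (Set.Ioi 0) :=
    fun α hα ↦ (hm α hα).2
  exact ⟨strictAntiOn_of_rightInvOn_of_mapsTo hanti hinv hmaps,
    tendsto_nhdsGT_atTop_of_rightInvOn hanti hzero hinv hmaps,
    tendsto_atTop_nhds_of_rightInvOn hanti hinv hmaps⟩

/-- Properties of `f(μ) = (1/p) tr[A² (A + μ I)⁻²]` (cf. Remark 5.1): `f` is strictly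
decreasing on `(-λ_min⁺(A), ∞)`, tends to `∞` at `-λ_min⁺(A)` and to `0` at `∞`; for every
`α > 0` there is a unique `μ₀(α)` with `f(μ₀(α)) = α`, and `α ↦ μ₀(α)` is strictly
decreasing with `μ₀(α) → ∞` as `α ↘ 0` and `μ₀(α) → -λ_min⁺(A)` as `α → ∞`. -/
theorem stmt9 {p : ℕ} (A : Matrix (Fin p) (Fin p) ℂ)
    (hA : A.PosSemidef) (hA0 : A ≠ 0) :
    StrictAntiOn (fun μ : ℝ => (p : ℝ)⁻¹ * specSum2 hA.1.eigenvalues μ)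
      (Set.Ioi (-(lminp hA.1)))
    ∧ Tendsto (fun μ : ℝ => (p : ℝ)⁻¹ * specSum2 hA.1.eigenvalues μ)
        (nhdsWithin (-(lminp hA.1)) (Set.Ioi (-(lminp hA.1)))) atTop
    ∧ Tendsto (fun μ : ℝ => (p : ℝ)⁻¹ * specSum2 hA.1.eigenvalues μ) atTop (nhds 0)
    ∧ (∀ α : ℝ, 0 < α → ∃! μ₀ : ℝ, μ₀ ∈ Set.Ioi (-(lminp hA.1)) ∧
        (p : ℝ)⁻¹ * specSum2 hA.1.eigenvalues μ₀ = α)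
    ∧ ∀ m : ℝ → ℝ,
        (∀ α : ℝ, 0 < α → m α ∈ Set.Ioi (-(lminp hA.1)) ∧
          (p : ℝ)⁻¹ * specSum2 hA.1.eigenvalues (m α) = α) →
        StrictAntiOn m (Set.Ioi 0)
        ∧ Tendsto m (nhdsWithin 0 (Set.Ioi 0)) atTop
        ∧ Tendsto m atTop (nhds (-(lminp hA.1))) :=
  stmt9_general hA.1 (exists_eigenvalues_pos_of_posSemidef hA hA0)
end

section
/- Let A ∈ ℂ^{p×p} be a nonzero positive semidefinite matrix and q ≥ 1 an integer; let μ₀ be the unique solution in (−λ_min⁺(A), ∞) of 1 = (1/q) Σ_{i: λ_i(A)>0} λ_i(A)²/(λ_i(A)+μ₀)², and set λ₀ = μ₀(1 − (1/q) Σ_{i: λ_i(A)>0} λ_i(A)/(λ_i(A)+μ₀)). Then the function F(μ) = μ (1 − (1/q) Σ_{i: λ_i(A)>0} λ_i(A)/(λ_i(A)+μ)) is a strictly increasing bijection from (μ₀, ∞) onto (λ₀, ∞) with derivative F'(μ) = 1 − (1/q) Σ_{i: λ_i(A)>0} λ_i(A)²/(λ_i(A)+μ)² > 0 on (μ₀,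 ∞). Consequently, for each λ ∈ (λ₀, ∞) there is a unique μ(λ) ∈ (μ₀, ∞) with F(μ(λ)) = λ, the map λ ↦ μ(λ) is strictly increasing, μ(λ) → μ₀ as λ ↘ λ₀, and μ(λ) → ∞ as λ → ∞. -/
open Matrix Filter
open scoped ComplexOrder

/-!
Write `F(x) = x * (1 - c * specSum1 e x)`, where `c = 1 / q` and `e` is the family of eigenvalues.
Since `x * (a / (a + x)) = a - a ^ 2 / (a + x)`, each term of `x * specSum1 e x` has derivative
`a ^ 2 / (a + x) ^ 2` and limit `a` at infinity. Hence `F' = 1 - c * specSum2 e`, and `F` differs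
from the identity by a function with a finite limit, so `F → ∞`. The sum `specSum2 e` strictly
decreases and `c * specSum2 e μ₀ = 1`, so `F' > 0` to the right of `μ₀`. A continuous strictly
increasing function on `[μ₀, ∞)` that tends to infinity maps `(μ₀, ∞)` onto `(F μ₀, ∞)`, and its
inverse inherits monotonicity and both limits.
-/

section Inverse

open Set Topology

variable {α β : Type*}

theorem existsUnique_mem_eq_of_bijOn {f : α → β} {s : Set α} {t : Set β} (hf : BijOn f s t)
    {y : β} (hy : y ∈ t) : ∃! x, x ∈ s ∧ f x = y := by
  obtain ⟨x, hx, rfl⟩ := hf.surjOn hy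
  exact ⟨x, ⟨hx, rfl⟩, fun z hz => hf.injOn hz.1 hx hz.2⟩

variable [LinearOrder α] [LinearOrder β] {f : α → β} {g : β → α}

theorem strictMonoOn_of_rightInvOn_of_mapsTo {s : Set α} {t : Set β} (hf : MonotoneOn f s)
    (hg : MapsTo g t s) (hfg : RightInvOn g f t) : StrictMonoOn g t := by
  intro x hx y hy hxy
  refine hf.reflect_lt (hg hx) (hg hy) ?_
  rwa [hfg hx, hfg hy]

variable {a : α}

theorem tendsto_nhdsGT_of_rightInvOn [TopologicalSpace α] [OrderTopology α] [TopologicalSpace β]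
    [ClosedIciTopology β] (hf : StrictMonoOn f (Ici a)) (hg : MapsTo g (Ioi (f a)) (Ioi a))
    (hfg : RightInvOn g f (Ioi (f a))) : Tendsto g (𝓝[>] f a) (𝓝 a) := by
  refine tendsto_order.2 ⟨fun x hx => ?_, fun x hx => ?_⟩
  · filter_upwards [self_mem_nhdsWithin] with y hy using hx.trans (hg hy)
  · filter_upwards [Ioo_mem_nhdsGT (hf.mapsTo_Ioi hx)] with y hy
    refine (hf.lt_iff_lt (hg hy.1).le hx.le).1 ?_
    rw [hfg hy.1]
    exact hy.2

theorem tendsto_atTop_of_rightInvOn [NoMaxOrder β] (hf : StrictMonoOn f (Ici a))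
    (hg : MapsTo g (Ioi (f a)) (Ioi a)) (hfg : RightInvOn g f (Ioi (f a))) :
    Tendsto g atTop atTop := by
  refine tendsto_atTop.2 fun x => ?_
  filter_upwards [eventually_gt_atTop (f a), eventually_ge_atTop (f (max x a))] with y hay hxy
  refine (le_max_left x a).trans ((hf.le_iff_le (le_max_right x a) (hg hay).le).1 ?_)
  rwa [hfg hay]

end Inverse

theorem hasDerivAt_mul_div_add {𝕜 : Type*} [NontriviallyNormedField 𝕜] {a x : 𝕜}
    (hx : a + x ≠ 0) : HasDerivAt (fun y => y * (a / (a + y))) (a ^ 2 / (a + x) ^ 2) x := by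
  have h_quot : HasDerivAt (fun y => a / (a + y)) (-a / (a + x) ^ 2) x := by
    simpa using (hasDerivAt_const x a).fun_div ((hasDerivAt_id x).const_add a) hx
  refine ((hasDerivAt_id x).fun_mul h_quot).congr_deriv ?_
  simp only [id_eq]
  field_simp
  ring

theorem tendsto_mul_div_add_atTop {𝕜 : Type*} [Field 𝕜] [LinearOrder 𝕜] [IsStrictOrderedRing 𝕜]
    [TopologicalSpace 𝕜] [OrderTopology 𝕜] (a : 𝕜) :
    Tendsto (fun x => x * (a / (a + x))) atTop (nhds a) := by
  have h_lim : Tendsto (fun x => a - a ^ 2 / (a + x)) atTop (nhds a) := by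
    simpa using tendsto_const_nhds.sub
      (tendsto_const_nhds.div_atTop (tendsto_atTop_add_const_left atTop a tendsto_id))
  refine h_lim.congr' ?_
  filter_upwards [eventually_gt_atTop (-a)] with x hx
  have hne : a + x ≠ 0 := (neg_lt_iff_pos_add'.1 hx).ne'
  field_simp
  ring

section SpectralSums

variable {p : ℕ} {e : Fin p → ℝ} {c μ μ₀ : ℝ}

/-- The half-line of parameters to the right of all poles `-eᵢ`, `eᵢ > 0`, of the spectral sums of
`e`. For the eigenvalues of a nonzero positive semidefinite matrix this is `(-λ_min⁺, ∞)`; it is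
all of `ℝ` when no `eᵢ` is positive. -/
def specDomain (e : Fin p → ℝ) : Set ℝ :=
  {μ | ∀ i, 0 < e i → 0 < e i + μ}

/-- The map `F(μ) = μ (1 - c Σ_{i : eᵢ > 0} eᵢ / (eᵢ + μ))`, whose values are the regularization
levels `λ` belonging to the parameters `μ`; the matrix case has `c = 1/q`. -/
noncomputable def fixedPointMap (e : Fin p → ℝ) (c μ : ℝ) : ℝ :=
  μ * (1 - c * specSum1 e μ)

theorem isUpperSet_specDomain (e : Fin p → ℝ) : IsUpperSet (specDomain e) :=
  fun _ _ h hμ i hi => (hμ i hi).trans_le (by gcongr)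

theorem specSum2_nonneg (e : Fin p → ℝ) (μ : ℝ) : 0 ≤ specSum2 e μ :=
  Finset.sum_nonneg fun i _ => by split_ifs <;> positivity

theorem exists_pos_of_specSum2_ne_zero (h : specSum2 e μ ≠ 0) : ∃ i, 0 < e i := by
  contrapose! h
  exact Finset.sum_eq_zero fun i _ => if_neg (h i).not_gt

theorem strictAntiOn_specSum2_s12 (he : ∃ i, 0 < e i) : StrictAntiOn (specSum2 e) (specDomain e) := by
  intro x hx y _ hxy
  have h_term : ∀ i, 0 < e i → e i ^ 2 / (e i + y) ^ 2 < e i ^ 2 / (e i + x) ^ 2 := by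
    intro i hi
    have := hx i hi
    gcongr
  obtain ⟨j, hj⟩ := he
  refine Finset.sum_lt_sum (fun i _ => ?_) ⟨j, Finset.mem_univ j, ?_⟩
  · split_ifs with hi
    exacts [(h_term i hi).le, le_rfl]
  · simpa only [if_pos hj] using h_term j hj

theorem one_sub_mul_specSum2_pos (hμ₀ : μ₀ ∈ specDomain e) (h_one : c * specSum2 e μ₀ = 1)
    (hμ : μ₀ < μ) : 0 < 1 - c * specSum2 e μ := by
  have hc : 0 < c := pos_of_mul_pos_left (h_one ▸ one_pos) (specSum2_nonneg e μ₀)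
  have he : ∃ i, 0 < e i :=
    exists_pos_of_specSum2_ne_zero (right_ne_zero_of_mul (h_one ▸ one_ne_zero))
  rw [sub_pos, ← h_one]
  gcongr
  exact strictAntiOn_specSum2_s12 he hμ₀ (isUpperSet_specDomain e hμ.le hμ₀) hμ

theorem mul_specSum1 (e : Fin p → ℝ) (μ : ℝ) :
    μ * specSum1 e μ = ∑ i, if 0 < e i then μ * (e i / (e i + μ)) else 0 := by
  simp only [specSum1, Finset.mul_sum, mul_ite, mul_zero]

theorem hasDerivAt_mul_specSum1 (hμ : μ ∈ specDomain e) :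
    HasDerivAt (fun x => x * specSum1 e x) (specSum2 e μ) μ := by
  simp only [mul_specSum1]
  refine HasDerivAt.fun_sum fun i _ => ?_
  split_ifs with hi
  exacts [hasDerivAt_mul_div_add (hμ i hi).ne', hasDerivAt_const μ 0]

theorem tendsto_mul_specSum1_atTop (e : Fin p → ℝ) :
    Tendsto (fun x => x * specSum1 e x) atTop (nhds (∑ i, if 0 < e i then e i else 0)) := by
  simp only [mul_specSum1]
  refine tendsto_finsetSum _ fun i _ => ?_
  split_ifs
  exacts [tendsto_mul_div_add_atTop (e i), tendsto_const_nhds]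

theorem fixedPointMap_eq_sub (e : Fin p → ℝ) (c μ : ℝ) :
    fixedPointMap e c μ = μ - c * (μ * specSum1 e μ) := by
  rw [fixedPointMap]
  ring

theorem hasDerivAt_fixedPointMap (c : ℝ) (hμ : μ ∈ specDomain e) :
    HasDerivAt (fixedPointMap e c) (1 - c * specSum2 e μ) μ := by
  rw [funext (fixedPointMap_eq_sub e c)]
  exact (hasDerivAt_id μ).fun_sub ((hasDerivAt_mul_specSum1 hμ).const_mul c)

theorem tendsto_fixedPointMap_atTop (e : Fin p → ℝ) (c : ℝ) :
    Tendsto (fixedPointMap e c) atTop atTop := by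
  rw [funext (fixedPointMap_eq_sub e c)]
  simpa only [sub_eq_add_neg, id_eq] using
    tendsto_id.atTop_add ((tendsto_mul_specSum1_atTop e).const_mul c).neg

theorem continuousOn_fixedPointMap (e : Fin p → ℝ) (c : ℝ) :
    ContinuousOn (fixedPointMap e c) (specDomain e) :=
  fun _ hμ => (hasDerivAt_fixedPointMap c hμ).continuousAt.continuousWithinAt

theorem strictMonoOn_fixedPointMap (hμ₀ : μ₀ ∈ specDomain e) (h_one : c * specSum2 e μ₀ = 1) :
    StrictMonoOn (fixedPointMap e c) (Set.Ici μ₀) := by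
  have h_Ici : Set.Ici μ₀ ⊆ specDomain e := (isUpperSet_specDomain e).Ici_subset hμ₀
  refine strictMonoOn_of_deriv_pos (convex_Ici μ₀) ((continuousOn_fixedPointMap e c).mono h_Ici)
    fun μ hμ => ?_
  rw [interior_Ici] at hμ
  rw [(hasDerivAt_fixedPointMap c (h_Ici (Set.Ioi_subset_Ici_self hμ))).deriv]
  exact one_sub_mul_specSum2_pos hμ₀ h_one hμ

theorem stmt12_general {lam₀ : ℝ} (hμ₀ : μ₀ ∈ specDomain e) (h_one : c * specSum2 e μ₀ = 1)
    (hlam₀ : lam₀ = fixedPointMap e c μ₀) :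
    StrictMonoOn (fixedPointMap e c) (Set.Ioi μ₀)
    ∧ Set.BijOn (fixedPointMap e c) (Set.Ioi μ₀) (Set.Ioi lam₀)
    ∧ (∀ μ ∈ Set.Ioi μ₀, HasDerivAt (fixedPointMap e c) (1 - c * specSum2 e μ) μ
        ∧ 0 < 1 - c * specSum2 e μ)
    ∧ (∀ lam ∈ Set.Ioi lam₀, ∃! μ : ℝ, μ ∈ Set.Ioi μ₀ ∧ fixedPointMap e c μ = lam)
    ∧ ∀ m : ℝ → ℝ,
        (∀ lam ∈ Set.Ioi lam₀, m lam ∈ Set.Ioi μ₀ ∧ fixedPointMap e c (m lam) = lam) →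
        StrictMonoOn m (Set.Ioi lam₀)
        ∧ Tendsto m (nhdsWithin lam₀ (Set.Ioi lam₀)) (nhds μ₀)
        ∧ Tendsto m atTop atTop := by
  subst hlam₀
  have h_Ici : Set.Ici μ₀ ⊆ specDomain e := (isUpperSet_specDomain e).Ici_subset hμ₀
  have h_mono := strictMonoOn_fixedPointMap hμ₀ h_one
  have h_mono_Ioi := h_mono.mono Set.Ioi_subset_Ici_self
  have h_image := ((continuousOn_fixedPointMap e c).mono h_Ici).image_Ioi_of_strictMonoOn h_mono
    (tendsto_fixedPointMap_atTop e c)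
  have h_bij := h_image ▸ h_mono_Ioi.injOn.bijOn_image
  have h_deriv : ∀ μ ∈ Set.Ioi μ₀,
      HasDerivAt (fixedPointMap e c) (1 - c * specSum2 e μ) μ ∧ 0 < 1 - c * specSum2 e μ :=
    fun μ hμ => ⟨hasDerivAt_fixedPointMap c (h_Ici (Set.Ioi_subset_Ici_self hμ)),
      one_sub_mul_specSum2_pos hμ₀ h_one hμ⟩
  refine ⟨h_mono_Ioi, h_bij, h_deriv, fun _ => existsUnique_mem_eq_of_bijOn h_bij,
    fun m hm => ?_⟩
  have h_maps : Set.MapsTo m _ _ := fun lam hlam => (hm lam hlam).1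
  have h_inv : Set.RightInvOn m _ _ := fun lam hlam => (hm lam hlam).2
  exact ⟨strictMonoOn_of_rightInvOn_of_mapsTo h_mono_Ioi.monotoneOn h_maps h_inv,
    tendsto_nhdsGT_of_rightInvOn h_mono h_maps h_inv,
    tendsto_atTop_of_rightInvOn h_mono h_maps h_inv⟩

end SpectralSums

theorem lminp_le_eigenvalues {p : ℕ} {A : Matrix (Fin p) (Fin p) ℂ} (hA : A.IsHermitian)
    {i : Fin p} (hi : 0 < hA.eigenvalues i) : lminp hA ≤ hA.eigenvalues i :=
  csInf_le ⟨0, fun _ hx => hx.1.le⟩ ⟨hi, i, rfl⟩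

theorem Ioi_neg_lminp_subset_specDomain {p : ℕ} {A : Matrix (Fin p) (Fin p) ℂ}
    (hA : A.IsHermitian) : Set.Ioi (-lminp hA) ⊆ specDomain hA.eigenvalues :=
  fun _ hμ _ hi => (neg_lt_iff_pos_add'.1 hμ).trans_le (by gcongr; exact lminp_le_eigenvalues hA hi)

/-- The fixed-point map `F(μ) = μ (1 - (1/q) tr[A (A + μ I)⁻¹])` is a strictly increasing
bijection from `(μ₀, ∞)` onto `(λ₀, ∞)` with positive derivative
`F'(μ) = 1 - (1/q) tr[A² (A + μ I)⁻²]`; for each `λ ∈ (λ₀, ∞)` there is a unique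
`μ(λ) ∈ (μ₀, ∞)` with `F(μ(λ)) = λ`, and `λ ↦ μ(λ)` is strictly increasing with
`μ(λ) → μ₀` as `λ ↘ λ₀` and `μ(λ) → ∞` as `λ → ∞`. -/
theorem stmt12 {p : ℕ} (A : Matrix (Fin p) (Fin p) ℂ)
    (hA : A.PosSemidef) (hA0 : A ≠ 0)
    (q : ℕ) (hq : 1 ≤ q) (μ₀ lam₀ : ℝ)
    (hμ₀ : -(lminp hA.1) < μ₀ ∧ 1 = (q : ℝ)⁻¹ * specSum2 hA.1.eigenvalues μ₀)
    (hlam₀ : lam₀ = μ₀ * (1 - (q : ℝ)⁻¹ * specSum1 hA.1.eigenvalues μ₀)) :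
    StrictMonoOn (fun μ : ℝ => μ * (1 - (q : ℝ)⁻¹ * specSum1 hA.1.eigenvalues μ))
      (Set.Ioi μ₀)
    ∧ Set.BijOn (fun μ : ℝ => μ * (1 - (q : ℝ)⁻¹ * specSum1 hA.1.eigenvalues μ))
        (Set.Ioi μ₀) (Set.Ioi lam₀)
    ∧ (∀ μ ∈ Set.Ioi μ₀,
        HasDerivAt (fun x : ℝ => x * (1 - (q : ℝ)⁻¹ * specSum1 hA.1.eigenvalues x))
          (1 - (q : ℝ)⁻¹ * specSum2 hA.1.eigenvalues μ) μ
        ∧ 0 < 1 - (q : ℝ)⁻¹ * specSum2 hA.1.eigenvalues μ)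
    ∧ (∀ lam ∈ Set.Ioi lam₀, ∃! μ : ℝ, μ ∈ Set.Ioi μ₀ ∧
        μ * (1 - (q : ℝ)⁻¹ * specSum1 hA.1.eigenvalues μ) = lam)
    ∧ ∀ m : ℝ → ℝ,
        (∀ lam ∈ Set.Ioi lam₀, m lam ∈ Set.Ioi μ₀ ∧
          m lam * (1 - (q : ℝ)⁻¹ * specSum1 hA.1.eigenvalues (m lam)) = lam) →
        StrictMonoOn m (Set.Ioi lam₀)
        ∧ Tendsto m (nhdsWithin lam₀ (Set.Ioi lam₀)) (nhds μ₀)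
        ∧ Tendsto m atTop atTop :=
  stmt12_general (Ioi_neg_lminp_subset_specDomain hA.1 hμ₀.1) hμ₀.2.symm hlam₀
end

section
/- Let A ∈ ℂ^{p×p} be a nonzero positive semidefinite matrix, let q ≥ 1, set α = q/p, let μ₀ be the unique solution in (−λ_min⁺(A), ∞) of 1 = (1/q) Σ_{i: λ_i(A)>0} λ_i(A)²/(λ_i(A)+μ₀)², let λ₀ = μ₀(1 − (1/q) Σ_{i: λ_i(A)>0} λ_i(A)/(λ_i(A)+μ₀)), and for λ ∈ (λ₀, ∞) let μ(λ) be the unique solution in (μ₀, ∞) of λ = μ(1 − (1/q) Σ_{i: λ_i(A)>0} λ_i(A)/(λ_i(A)+μ)). Then: (a) λ ↦ μ(λ) is concave on (λ₀, ∞); (b) μ(λ) ≤ λ + (1/q) tr[A] for all λ ∈ (λ₀, ∞); (c) if α ≤ r(A) then μ(λ) ≥ λ for all λ ∈ (λ₀, ∞), and otherwise μ(λ) ≥ λ for all λ ≥ 0; and (d) |μ(λ) − (λ + (1/q) tr[A])| → 0 as λ → ∞. -/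
open Matrix Filter
open scoped ComplexOrder

/-! Write `g(μ) = μ (1 - (1/q) Σ eᵢ / (eᵢ + μ))`, so that `μ(λ)` solves `g(μ) = λ`. Since
`g(μ) = μ - (1/q) Σ eᵢ + (1/q) Σ eᵢ² / (eᵢ + μ)`, the function `g` is convex with
`g'(μ) = 1 - (1/q) Σ eᵢ² / (eᵢ + μ)²`, and `μ₀` is exactly its critical point: `g` increases
strictly on `[μ₀, ∞)`. An inverse of an increasing convex function is concave, and the bounds and
the asymptotics of `μ(λ)` are those of `g` read backwards. The sign of `μ₀` is decided by comparing
`Σ eᵢ² / (eᵢ + μ₀)² = q` with the value of the same sum at `0`, which is the rank. -/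

section RightInverse

open Set

variable {𝕜 E β : Type*} [Semiring 𝕜] [PartialOrder 𝕜]
  [AddCommMonoid E] [PartialOrder E] [SMul 𝕜 E]
  [AddCommMonoid β] [LinearOrder β] [SMul 𝕜 β]

theorem concaveOn_of_leftInvOn {f : E → β} {g : β → E} {s : Set E} {t : Set β}
    (hg : ConvexOn 𝕜 t g) (hmono : StrictMonoOn g t) (hs : Convex 𝕜 s) (hf : MapsTo f s t)
    (hinv : LeftInvOn g f s) : ConcaveOn 𝕜 s f := by
  refine ⟨hs, fun x hx y hy a b ha hb hab => ?_⟩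
  have hxy : a • x + b • y ∈ s := hs hx hy ha hb hab
  refine (hmono.le_iff_le (hg.1 (hf hx) (hf hy) ha hb hab) (hf hxy)).1 ?_
  calc g (a • f x + b • f y) ≤ a • g (f x) + b • g (f y) := hg.2 (hf hx) (hf hy) ha hb hab
    _ = g (f (a • x + b • y)) := by rw [hinv hx, hinv hy, hinv hxy]

end RightInverse

section ExplicitReg

open Set Topology

variable {ι : Type*} {s : Finset ι} {e : ι → ℝ} {q m x : ℝ}

/-- The interval `(-min e, ∞)` of shifts `x` for which all `e i + x` with `i ∈ s` are positive;
it plays the role of `(-λ_min⁺, ∞)`. -/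
def shiftDomain (s : Finset ι) (e : ι → ℝ) : Set ℝ :=
  ⋂ i ∈ s, Ioi (-e i)

/-- The explicit regularization `λ = x (1 - (1/q) Σ eᵢ / (eᵢ + x))` as a function of the implicit
one `x = μ(λ)`. -/
noncomputable def explicitReg (s : Finset ι) (e : ι → ℝ) (q x : ℝ) : ℝ :=
  x * (1 - q⁻¹ * ∑ i ∈ s, e i / (e i + x))

theorem mem_shiftDomain : x ∈ shiftDomain s e ↔ ∀ i ∈ s, 0 < e i + x := by
  simp only [shiftDomain, mem_iInter, mem_Ioi, neg_lt_iff_pos_add']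

theorem convex_shiftDomain : Convex ℝ (shiftDomain s e) :=
  convex_iInter₂ fun i _ => convex_Ioi (-e i)

theorem isOpen_shiftDomain : IsOpen (shiftDomain s e) :=
  isOpen_biInter_finset fun _ _ => isOpen_Ioi

theorem Ici_subset_shiftDomain (hm : m ∈ shiftDomain s e) : Ici m ⊆ shiftDomain s e :=
  subset_iInter₂ fun i hi => Ici_subset_Ioi.2 (mem_iInter₂.1 hm i hi)

theorem strictAntiOn_sum_sq_div (hs : s.Nonempty) (he : ∀ i ∈ s, e i ≠ 0) :
    StrictAntiOn (fun x => ∑ i ∈ s, e i ^ 2 / (e i + x) ^ 2) (shiftDomain s e) := by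
  intro x hx y _ hxy
  refine Finset.sum_lt_sum_of_nonempty hs fun i hi => ?_
  have hxi : 0 < e i + x := mem_shiftDomain.1 hx i hi
  have hei : 0 < e i ^ 2 := sq_pos_of_ne_zero (he i hi)
  gcongr

theorem sum_sq_div_add_zero_sq (he : ∀ i ∈ s, e i ≠ 0) :
    ∑ i ∈ s, e i ^ 2 / (e i + 0) ^ 2 = (s.card : ℝ) := by
  have hterm : ∀ i ∈ s, e i ^ 2 / (e i + 0) ^ 2 = 1 := fun i hi => by
    rw [add_zero, div_self (pow_ne_zero 2 (he i hi))]
  rw [Finset.sum_congr rfl hterm, Finset.sum_const, nsmul_one]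

theorem explicitReg_zero : explicitReg s e q 0 = 0 :=
  zero_mul _

theorem explicitReg_eq (hx : x ∈ shiftDomain s e) :
    explicitReg s e q x = x - q⁻¹ * ∑ i ∈ s, e i + q⁻¹ * ∑ i ∈ s, e i ^ 2 / (e i + x) := by
  have hterm : ∀ i ∈ s, x * (e i / (e i + x)) = e i - e i ^ 2 / (e i + x) := fun i hi => by
    have := (mem_shiftDomain.1 hx i hi).ne'
    field_simp
    ring
  have hsum : x * ∑ i ∈ s, e i / (e i + x) = ∑ i ∈ s, e i - ∑ i ∈ s, e i ^ 2 / (e i + x) := by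
    rw [Finset.mul_sum, Finset.sum_congr rfl hterm, Finset.sum_sub_distrib]
  rw [explicitReg]
  linear_combination -q⁻¹ * hsum

theorem sub_le_explicitReg (hq : 0 ≤ q) (hx : x ∈ shiftDomain s e) :
    x - q⁻¹ * ∑ i ∈ s, e i ≤ explicitReg s e q x := by
  rw [explicitReg_eq hx, le_add_iff_nonneg_right]
  exact mul_nonneg (inv_nonneg.2 hq) <|
    Finset.sum_nonneg fun i hi => div_nonneg (sq_nonneg _) (mem_shiftDomain.1 hx i hi).le

theorem explicitReg_le_self (hq : 0 ≤ q) (he : ∀ i ∈ s, 0 ≤ e i) (hx : 0 ≤ x) :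
    explicitReg s e q x ≤ x := by
  have hsum : 0 ≤ ∑ i ∈ s, e i / (e i + x) :=
    Finset.sum_nonneg fun i hi => div_nonneg (he i hi) (add_nonneg (he i hi) hx)
  exact mul_le_of_le_one_right hx (sub_le_self 1 (mul_nonneg (inv_nonneg.2 hq) hsum))

theorem tendsto_sub_explicitReg (s : Finset ι) (e : ι → ℝ) (q : ℝ) :
    Tendsto (fun x => x - (explicitReg s e q x + q⁻¹ * ∑ i ∈ s, e i)) atTop (𝓝 0) := by
  have hsum : Tendsto (fun x => ∑ i ∈ s, e i ^ 2 / (e i + x)) atTop (𝓝 (∑ _ ∈ s, (0 : ℝ))) :=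
    tendsto_finsetSum s fun i _ =>
      (tendsto_atTop_add_const_left atTop (e i) tendsto_id).const_div_atTop _
  have hlim : Tendsto (fun x => -(q⁻¹ * ∑ i ∈ s, e i ^ 2 / (e i + x))) atTop (𝓝 0) := by
    simpa using (hsum.const_mul q⁻¹).neg
  have hdom : ∀ᶠ x in atTop, x ∈ shiftDomain s e :=
    s.iInter_mem_sets.2 fun i _ => Ioi_mem_atTop (-e i)
  refine hlim.congr' (hdom.mono fun x hx => ?_)
  simp only [explicitReg_eq hx]
  ring

theorem hasDerivAt_explicitReg (hx : x ∈ shiftDomain s e) :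
    HasDerivAt (explicitReg s e q) (1 - q⁻¹ * ∑ i ∈ s, e i ^ 2 / (e i + x) ^ 2) x := by
  have hterm : ∀ i ∈ s, HasDerivAt (fun y => e i ^ 2 / (e i + y)) (-(e i ^ 2 / (e i + x) ^ 2)) x :=
    fun i hi => by
      simpa [neg_div] using (hasDerivAt_const x (e i ^ 2)).fun_div
        ((hasDerivAt_id' x).const_add (e i)) (mem_shiftDomain.1 hx i hi).ne'
  have hform := ((hasDerivAt_id' x).sub_const (q⁻¹ * ∑ i ∈ s, e i)).fun_add
    ((HasDerivAt.fun_sum hterm).const_mul q⁻¹)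
  rw [Finset.sum_neg_distrib, mul_neg, ← sub_eq_add_neg] at hform
  refine hform.congr_of_eventuallyEq ?_
  filter_upwards [isOpen_shiftDomain.mem_nhds hx] with y hy using explicitReg_eq hy

theorem continuousOn_explicitReg : ContinuousOn (explicitReg s e q) (shiftDomain s e) :=
  fun _ hx => (hasDerivAt_explicitReg hx).continuousAt.continuousWithinAt

theorem strictConvexOn_explicitReg (hq : 0 < q) (hs : s.Nonempty) (he : ∀ i ∈ s, e i ≠ 0) :
    StrictConvexOn ℝ (shiftDomain s e) (explicitReg s e q) := by
  refine StrictMonoOn.strictConvexOn_of_deriv convex_shiftDomain continuousOn_explicitReg ?_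
  rw [isOpen_shiftDomain.interior_eq]
  intro x hx y hy hxy
  rw [(hasDerivAt_explicitReg hx).deriv, (hasDerivAt_explicitReg hy).deriv]
  have := strictAntiOn_sum_sq_div hs he hx hy hxy
  gcongr

theorem strictMonoOn_explicitReg (hq : 0 < q) (hs : s.Nonempty) (he : ∀ i ∈ s, e i ≠ 0)
    (hm : m ∈ shiftDomain s e) (hcrit : ∑ i ∈ s, e i ^ 2 / (e i + m) ^ 2 ≤ q) :
    StrictMonoOn (explicitReg s e q) (Ici m) := by
  have hsub : Ici m ⊆ shiftDomain s e := Ici_subset_shiftDomain hm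
  refine strictMonoOn_of_deriv_pos (convex_Ici m) (continuousOn_explicitReg.mono hsub) ?_
  rw [interior_Ici]
  intro x hx
  have hxD : x ∈ shiftDomain s e := hsub (Ioi_subset_Ici_self hx)
  have hlt : ∑ i ∈ s, e i ^ 2 / (e i + x) ^ 2 < q :=
    (strictAntiOn_sum_sq_div hs he hm hxD hx).trans_le hcrit
  rwa [(hasDerivAt_explicitReg hxD).deriv, sub_pos, inv_mul_lt_one₀ hq]

theorem tendsto_sub_of_leftInvOn_explicitReg {f : ℝ → ℝ} {l₀ : ℝ}
    (hinv : LeftInvOn (explicitReg s e q) f (Ioi l₀)) (hle : ∀ᶠ l in atTop, l ≤ f l) :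
    Tendsto (fun l => f l - (l + q⁻¹ * ∑ i ∈ s, e i)) atTop (𝓝 0) := by
  have hf : Tendsto f atTop atTop := tendsto_atTop_mono' atTop hle tendsto_id
  refine ((tendsto_sub_explicitReg s e q).comp hf).congr' ?_
  filter_upwards [Ioi_mem_atTop l₀] with l hl
  rw [Function.comp_apply, hinv hl]

end ExplicitReg

section CriticalShift

open Set

variable {ι : Type*} {s : Finset ι} {e : ι → ℝ} {q m x : ℝ}

/-- The defining property of `μ₀`: the shift `m` lies in the domain of a positive spectrum and
solves `1 = (1/q) Σ eᵢ² / (eᵢ + m)²`, so it is the critical point of `explicitReg s e q`. -/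
structure IsCriticalShift (s : Finset ι) (e : ι → ℝ) (q m : ℝ) : Prop where
  pos : ∀ i ∈ s, 0 < e i
  mem_shiftDomain : m ∈ shiftDomain s e
  one_eq : 1 = q⁻¹ * ∑ i ∈ s, e i ^ 2 / (e i + m) ^ 2

namespace IsCriticalShift

theorem ne_zero (h : IsCriticalShift s e q m) : ∀ i ∈ s, e i ≠ 0 :=
  fun i hi => (h.pos i hi).ne'

theorem q_ne_zero (h : IsCriticalShift s e q m) : q ≠ 0 :=
  inv_eq_zero.not.1 (left_ne_zero_of_mul (h.one_eq.symm.trans_ne one_ne_zero))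

theorem sum_sq_div_eq (h : IsCriticalShift s e q m) :
    ∑ i ∈ s, e i ^ 2 / (e i + m) ^ 2 = q :=
  ((inv_mul_eq_one₀ h.q_ne_zero).1 h.one_eq.symm).symm

theorem q_pos (h : IsCriticalShift s e q m) : 0 < q := by
  have hq : 0 ≤ q := h.sum_sq_div_eq ▸ Finset.sum_nonneg fun i _ => by positivity
  exact hq.lt_of_ne' h.q_ne_zero

theorem nonempty (h : IsCriticalShift s e q m) : s.Nonempty :=
  Finset.nonempty_of_sum_ne_zero (h.sum_sq_div_eq.trans_ne h.q_pos.ne')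

theorem neg_iff_card_lt (h : IsCriticalShift s e q m) : m < 0 ↔ s.card < q := by
  have h0 : (0 : ℝ) ∈ shiftDomain s e := _root_.mem_shiftDomain.2 (by simpa using h.pos)
  rw [← sum_sq_div_add_zero_sq h.ne_zero, ← h.sum_sq_div_eq]
  exact ((strictAntiOn_sum_sq_div h.nonempty h.ne_zero).lt_iff_gt h0 h.mem_shiftDomain).symm

theorem strictMonoOn_explicitReg (h : IsCriticalShift s e q m) :
    StrictMonoOn (explicitReg s e q) (Ici m) :=
  _root_.strictMonoOn_explicitReg h.q_pos h.nonempty h.ne_zero h.mem_shiftDomain h.sum_sq_div_eq.le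

theorem convexOn_explicitReg (h : IsCriticalShift s e q m) :
    ConvexOn ℝ (Ici m) (explicitReg s e q) :=
  (strictConvexOn_explicitReg h.q_pos h.nonempty h.ne_zero).convexOn.subset
    (Ici_subset_shiftDomain h.mem_shiftDomain) (convex_Ici m)

theorem explicitReg_le_self_of_le_card (h : IsCriticalShift s e q m) (hcard : q ≤ s.card)
    (hx : m ≤ x) : explicitReg s e q x ≤ x := by
  have hm : 0 ≤ m := not_lt.1 (h.neg_iff_card_lt.not.2 hcard.not_gt)
  exact explicitReg_le_self h.q_pos.le (fun i hi => (h.pos i hi).le) (hm.trans hx)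

theorem explicitReg_le_self_of_nonneg (h : IsCriticalShift s e q m) (hx : m ≤ x)
    (h0 : 0 ≤ explicitReg s e q x) : explicitReg s e q x ≤ x := by
  refine explicitReg_le_self h.q_pos.le (fun i hi => (h.pos i hi).le) ?_
  by_contra! hneg
  have hlt : explicitReg s e q x < explicitReg s e q 0 :=
    h.strictMonoOn_explicitReg hx (hx.trans hneg.le) hneg
  exact (hlt.trans_eq explicitReg_zero).not_ge h0

theorem explicitReg_neg_of_card_lt (h : IsCriticalShift s e q m) (hcard : s.card < q) :
    explicitReg s e q m < 0 := by
  have hm : m < 0 := h.neg_iff_card_lt.2 hcard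
  exact (h.strictMonoOn_explicitReg self_mem_Ici hm.le hm).trans_eq explicitReg_zero

end IsCriticalShift

end CriticalShift

section PosIndices

variable {ι : Type*} [Fintype ι]

/-- The indices of the positive entries of `e`, over which the spectral sums run. -/
noncomputable def posIndices (e : ι → ℝ) : Finset ι :=
  Finset.univ.filter fun i => 0 < e i

theorem mem_posIndices {e : ι → ℝ} {i : ι} : i ∈ posIndices e ↔ 0 < e i := by
  simp only [posIndices, Finset.mem_filter, Finset.mem_univ, true_and]

theorem mul_one_sub_specSum1 {p : ℕ} (e : Fin p → ℝ) (q x : ℝ) :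
    x * (1 - q⁻¹ * specSum1 e x) = explicitReg (posIndices e) e q x := by
  rw [explicitReg, posIndices, Finset.sum_filter, specSum1]

theorem specSum2_eq_sum_posIndices {p : ℕ} (e : Fin p → ℝ) (x : ℝ) :
    specSum2 e x = ∑ i ∈ posIndices e, e i ^ 2 / (e i + x) ^ 2 := by
  rw [posIndices, Finset.sum_filter, specSum2]

variable {𝕜 : Type*} [RCLike 𝕜] [DecidableEq ι] {A : Matrix ι ι 𝕜}

theorem rank_eq_card_posIndices (hA : A.PosSemidef) :
    A.rank = (posIndices hA.1.eigenvalues).card := by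
  rw [hA.1.rank_eq_card_non_zero_eigs, Fintype.card_subtype, posIndices]
  simp only [(hA.eigenvalues_nonneg _).lt_iff_ne']

theorem re_trace_eq_sum_posIndices (hA : A.PosSemidef) :
    RCLike.re A.trace = ∑ i ∈ posIndices hA.1.eigenvalues, hA.1.eigenvalues i := by
  have hzero : ∀ i ∉ posIndices hA.1.eigenvalues, hA.1.eigenvalues i = 0 := fun i hi =>
    (hA.eigenvalues_nonneg i).antisymm' (not_lt.1 (mem_posIndices.not.1 hi))
  rw [hA.1.trace_eq_sum_eigenvalues, ← RCLike.ofReal_sum, RCLike.ofReal_re]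
  exact (Finset.sum_subset (Finset.subset_univ _) fun i _ hi => hzero i hi).symm

end PosIndices

theorem mem_shiftDomain_of_neg_lminp_lt {p : ℕ} {A : Matrix (Fin p) (Fin p) ℂ}
    (hA : A.IsHermitian) {x : ℝ} (hx : -lminp hA < x) :
    x ∈ shiftDomain (posIndices hA.eigenvalues) hA.eigenvalues :=
  mem_shiftDomain.2 fun _ hi => by linarith [lminp_le_eigenvalues hA (mem_posIndices.1 hi)]

theorem isCriticalShift_posIndices {p : ℕ} {A : Matrix (Fin p) (Fin p) ℂ} (hA : A.IsHermitian)
    {q x : ℝ} (hx : -lminp hA < x) (hcrit : 1 = q⁻¹ * specSum2 hA.eigenvalues x) :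
    IsCriticalShift (posIndices hA.eigenvalues) hA.eigenvalues q x where
  pos _ := mem_posIndices.1
  mem_shiftDomain := mem_shiftDomain_of_neg_lminp_lt hA hx
  one_eq := by rw [← specSum2_eq_sum_posIndices, ← hcrit]

theorem stmt15_general {p : ℕ} (A : Matrix (Fin p) (Fin p) ℂ)
    (hA : A.PosSemidef) (q : ℝ) (μ₀ lam₀ : ℝ)
    (hμ₀ : -(lminp hA.1) < μ₀ ∧ 1 = q⁻¹ * specSum2 hA.1.eigenvalues μ₀)
    (hlam₀ : lam₀ = μ₀ * (1 - q⁻¹ * specSum1 hA.1.eigenvalues μ₀))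
    (μf : ℝ → ℝ)
    (hμf : ∀ lam ∈ Set.Ioi lam₀, μ₀ < μf lam ∧
      lam = μf lam * (1 - q⁻¹ * specSum1 hA.1.eigenvalues (μf lam))) :
    ConcaveOn ℝ (Set.Ioi lam₀) μf
    ∧ (∀ lam ∈ Set.Ioi lam₀, μf lam ≤ lam + q⁻¹ * (Matrix.trace A).re)
    ∧ (q / p ≤ (A.rank : ℝ) / p → ∀ lam ∈ Set.Ioi lam₀, lam ≤ μf lam)
    ∧ ((A.rank : ℝ) / p < q / p → ∀ lam : ℝ, 0 ≤ lam → lam ≤ μf lam)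
    ∧ Tendsto (fun lam : ℝ => μf lam - (lam + q⁻¹ * (Matrix.trace A).re)) atTop (nhds 0) := by
  simp only [mul_one_sub_specSum1] at hlam₀ hμf
  have h := isCriticalShift_posIndices hA.1 hμ₀.1 hμ₀.2
  have hp : (0 : ℝ) < p := Nat.cast_pos.2 h.nonempty.choose.pos
  have hmaps : Set.MapsTo μf (Set.Ioi lam₀) (Set.Ici μ₀) := fun lam hl => (hμf lam hl).1.le
  have hinv : Set.LeftInvOn (explicitReg _ hA.1.eigenvalues q) μf (Set.Ioi lam₀) :=
    fun lam hl => (hμf lam hl).2.symm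
  have hle : ∀ lam ∈ Set.Ioi lam₀, 0 ≤ lam → lam ≤ μf lam := fun lam hl h0 => by
    simpa only [hinv hl] using h.explicitReg_le_self_of_nonneg (hmaps hl) (by rwa [hinv hl])
  rw [show A.trace.re = _ from re_trace_eq_sum_posIndices hA, rank_eq_card_posIndices hA,
    div_le_div_iff_of_pos_right hp, div_lt_div_iff_of_pos_right hp]
  refine ⟨concaveOn_of_leftInvOn h.convexOn_explicitReg h.strictMonoOn_explicitReg
    (convex_Ioi lam₀) hmaps hinv, fun lam hl => ?_, fun hrank lam hl => ?_,
    fun hrank lam h0 => ?_, ?_⟩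
  · rw [← sub_le_iff_le_add]
    simpa only [hinv hl] using sub_le_explicitReg h.q_pos.le
      (Ici_subset_shiftDomain h.mem_shiftDomain (hmaps hl))
  · simpa only [hinv hl] using h.explicitReg_le_self_of_le_card hrank (hmaps hl)
  · exact hle lam ((hlam₀.trans_lt (h.explicitReg_neg_of_card_lt hrank)).trans_le h0) h0
  · refine tendsto_sub_of_leftInvOn_explicitReg hinv ?_
    filter_upwards [Ioi_mem_atTop lam₀, eventually_ge_atTop 0] using hle

/-- Concavity, bounds, and asymptotic behaviour of `μ` in `λ` (Proposition 5.5): `λ ↦ μ(λ)`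
is concave on `(λ₀, ∞)`; `μ(λ) ≤ λ + (1/q) tr[A]`; if `α ≤ r(A)` then `μ(λ) ≥ λ` on
`(λ₀, ∞)` and otherwise `μ(λ) ≥ λ` for all `λ ≥ 0`; and `μ(λ) - (λ + (1/q) tr[A]) → 0`
as `λ → ∞`. -/
theorem stmt15 {p : ℕ} (A : Matrix (Fin p) (Fin p) ℂ)
    (hA : A.PosSemidef) (hA0 : A ≠ 0)
    (q : ℕ) (hq : 1 ≤ q) (μ₀ lam₀ : ℝ)
    (hμ₀ : -(lminp hA.1) < μ₀ ∧ 1 = (q : ℝ)⁻¹ * specSum2 hA.1.eigenvalues μ₀)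
    (hlam₀ : lam₀ = μ₀ * (1 - (q : ℝ)⁻¹ * specSum1 hA.1.eigenvalues μ₀))
    (μf : ℝ → ℝ)
    (hμf : ∀ lam ∈ Set.Ioi lam₀, μ₀ < μf lam ∧
      lam = μf lam * (1 - (q : ℝ)⁻¹ * specSum1 hA.1.eigenvalues (μf lam))) :
    ConcaveOn ℝ (Set.Ioi lam₀) μf
    ∧ (∀ lam ∈ Set.Ioi lam₀, μf lam ≤ lam + (q : ℝ)⁻¹ * (Matrix.trace A).re)
    ∧ ((q : ℝ) / p ≤ (A.rank : ℝ) / p → ∀ lam ∈ Set.Ioi lam₀, lam ≤ μf lam)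
    ∧ ((A.rank : ℝ) / p < (q : ℝ) / p → ∀ lam : ℝ, 0 ≤ lam → lam ≤ μf lam)
    ∧ Tendsto (fun lam : ℝ => μf lam - (lam + (q : ℝ)⁻¹ * (Matrix.trace A).re))
        atTop (nhds 0) :=
  stmt15_general A hA q μ₀ lam₀ hμ₀ hlam₀ μf hμf
end

section
/- Let A ∈ ℂ^{p×p} be a nonzero positive semidefinite matrix and let q be such that q > p · r(A), where r(A) = rank(A)/p. Let μ₀ be the unique solution in (−λ_min⁺(A), ∞) of 1 = (1/q) Σ_{i: λ_i(A)>0} λ_i(A)²/(λ_i(A)+μ₀)². Then (p·r(A)/q − 1)·λ_max(A) < (√(p·r(A)/q) − 1)·λ_max(A) ≤ μ₀ ≤ (√(p·r(A)/q) − 1)·λ_min⁺(A) < 0. -/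
open Matrix Filter
open scoped ComplexOrder

/-!
Put `s = √(r / q)` with `r = rank A`, so that `0 < s < 1`. The equation for `μ₀` says that the `r`
numbers `(λ / (λ + μ₀))²`, for `λ` a positive eigenvalue, have average `s⁻²`. Hence one of them is at
most `s⁻²` and one is at least `s⁻²`; taking square roots, `(s - 1) λ ≤ μ₀ ≤ (s - 1) λ'` for some
positive eigenvalues `λ` and `λ'`. As `s - 1 < 0`, these bounds are weakest at the largest and at the
smallest positive eigenvalue. The two strict inequalities come from `s² < s < 1`.
-/

section Term

variable {x μ s : ℝ}

theorem sq_div_add_sq_le_inv_sq_iff (hs : 0 < s) (hx : 0 ≤ x) (hxμ : 0 < x + μ) :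
    x ^ 2 / (x + μ) ^ 2 ≤ (s ^ 2)⁻¹ ↔ (s - 1) * x ≤ μ := by
  rw [← div_pow, ← inv_pow,
    pow_le_pow_iff_left₀ (div_nonneg hx hxμ.le) (inv_nonneg.2 hs.le) two_ne_zero,
    div_le_iff₀ hxμ, le_inv_mul_iff₀ hs, sub_one_mul, sub_le_iff_le_add']

theorem inv_sq_le_sq_div_add_sq_iff (hs : 0 < s) (hx : 0 ≤ x) (hxμ : 0 < x + μ) :
    (s ^ 2)⁻¹ ≤ x ^ 2 / (x + μ) ^ 2 ↔ μ ≤ (s - 1) * x := by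
  rw [← div_pow, ← inv_pow,
    pow_le_pow_iff_left₀ (inv_nonneg.2 hs.le) (div_nonneg hx hxμ.le) two_ne_zero,
    le_div_iff₀ hxμ, inv_mul_le_iff₀ hs, sub_one_mul, le_sub_iff_add_le']

end Term

section Average

variable {ι : Type*} {S : Finset ι} {e : ι → ℝ} {q μ : ℝ}

theorem sum_inv_sq_sqrt_card_div (hS : S.Nonempty) (hq : 0 ≤ q) :
    ∑ _i ∈ S, (√(S.card / q) ^ 2)⁻¹ = q := by
  have hcard : (S.card : ℝ) ≠ 0 := by exact_mod_cast hS.card_ne_zero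
  rw [Finset.sum_const, nsmul_eq_mul, Real.sq_sqrt (by positivity), inv_div,
    mul_div_cancel₀ _ hcard]

theorem sqrt_card_div_pos (hS : S.Nonempty) (hq : 0 < q) : 0 < √(S.card / q) :=
  Real.sqrt_pos.2 (div_pos (Nat.cast_pos.2 hS.card_pos) hq)

theorem sqrt_card_div_sub_one_nonpos (hq : (S.card : ℝ) ≤ q) : √(S.card / q) - 1 ≤ 0 :=
  sub_nonpos.2 (Real.sqrt_le_one.2 (div_le_one_of_le₀ hq ((Nat.cast_nonneg _).trans hq)))

theorem exists_sqrt_card_div_sub_one_mul_le (hS : S.Nonempty) (hq : 0 < q)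
    (he : ∀ i ∈ S, 0 ≤ e i) (hμ : ∀ i ∈ S, 0 < e i + μ)
    (hsum : ∑ i ∈ S, e i ^ 2 / (e i + μ) ^ 2 ≤ q) :
    ∃ i ∈ S, (√(S.card / q) - 1) * e i ≤ μ := by
  rw [← sum_inv_sq_sqrt_card_div hS hq.le] at hsum
  obtain ⟨i, hi, hle⟩ := Finset.exists_le_of_sum_le hS hsum
  exact ⟨i, hi,
    (sq_div_add_sq_le_inv_sq_iff (sqrt_card_div_pos hS hq) (he i hi) (hμ i hi)).1 hle⟩

theorem exists_le_sqrt_card_div_sub_one_mul (hS : S.Nonempty) (hq : 0 < q)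
    (he : ∀ i ∈ S, 0 ≤ e i) (hμ : ∀ i ∈ S, 0 < e i + μ)
    (hsum : q ≤ ∑ i ∈ S, e i ^ 2 / (e i + μ) ^ 2) :
    ∃ i ∈ S, μ ≤ (√(S.card / q) - 1) * e i := by
  rw [← sum_inv_sq_sqrt_card_div hS hq.le] at hsum
  obtain ⟨i, hi, hle⟩ := Finset.exists_le_of_sum_le hS hsum
  exact ⟨i, hi,
    (inv_sq_le_sq_div_add_sq_iff (sqrt_card_div_pos hS hq) (he i hi) (hμ i hi)).1 hle⟩

end Average

/-- The smallest positive value of a finite family of reals, with value `0` when there is none. It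
extends `lminp` to real or complex matrices with any index type: `lminp hA` is
`minPos hA.eigenvalues` by definition. -/
noncomputable def minPos {ι : Type*} (e : ι → ℝ) : ℝ :=
  sInf {x : ℝ | 0 < x ∧ ∃ i, e i = x}

section MinPos

variable {ι : Type*} {e : ι → ℝ}

theorem minPos_le {i : ι} (hi : 0 < e i) : minPos e ≤ e i :=
  csInf_le ⟨0, fun _ hx ↦ hx.1.le⟩ ⟨hi, i, rfl⟩

theorem minPos_pos [Finite ι] (hpos : ∃ i, 0 < e i) : 0 < minPos e := by
  obtain ⟨i, hi⟩ := hpos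
  have hfin : {x : ℝ | 0 < x ∧ ∃ i, e i = x}.Finite :=
    (Set.finite_range e).subset fun _ hx ↦ hx.2
  exact (hfin.lt_csInf_iff ⟨e i, hi, i, rfl⟩).2 fun _ hx ↦ hx.1

theorem add_pos_of_neg_minPos_lt {i : ι} {μ : ℝ} (hμ : -minPos e < μ) (hi : 0 < e i) :
    0 < e i + μ := by
  linarith [minPos_le hi]

end MinPos

section Family

variable {ι : Type*} [Fintype ι] {e : ι → ℝ} {q μ : ℝ}

theorem sqrt_card_pos_div_sub_one_mul_iSup_le (hpos : ∃ i, 0 < e i)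
    (hq : (Finset.card {i | 0 < e i} : ℝ) ≤ q) (hμ : -minPos e < μ)
    (hsum : ∑ i with 0 < e i, e i ^ 2 / (e i + μ) ^ 2 ≤ q) :
    (√(Finset.card {i | 0 < e i} / q) - 1) * ⨆ i, e i ≤ μ := by
  have hS : (Finset.univ.filter (0 < e ·)).Nonempty := Finset.filter_nonempty_iff.2 (by simpa)
  have hq0 : 0 < q := (Nat.cast_pos.2 hS.card_pos).trans_le hq
  obtain ⟨i, -, hi⟩ := exists_sqrt_card_div_sub_one_mul_le hS hq0
    (fun i hi ↦ (Finset.mem_filter_univ i |>.1 hi).le)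
    (fun i hi ↦ add_pos_of_neg_minPos_lt hμ (Finset.mem_filter_univ i |>.1 hi)) hsum
  exact (mul_le_mul_of_nonpos_left (le_ciSup (Set.finite_range e).bddAbove i)
    (sqrt_card_div_sub_one_nonpos hq)).trans hi

theorem le_sqrt_card_pos_div_sub_one_mul_minPos (hpos : ∃ i, 0 < e i)
    (hq : (Finset.card {i | 0 < e i} : ℝ) ≤ q) (hμ : -minPos e < μ)
    (hsum : q ≤ ∑ i with 0 < e i, e i ^ 2 / (e i + μ) ^ 2) :
    μ ≤ (√(Finset.card {i | 0 < e i} / q) - 1) * minPos e := by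
  have hS : (Finset.univ.filter (0 < e ·)).Nonempty := Finset.filter_nonempty_iff.2 (by simpa)
  have hq0 : 0 < q := (Nat.cast_pos.2 hS.card_pos).trans_le hq
  obtain ⟨i, hiS, hi⟩ := exists_le_sqrt_card_div_sub_one_mul hS hq0
    (fun i hi ↦ (Finset.mem_filter_univ i |>.1 hi).le)
    (fun i hi ↦ add_pos_of_neg_minPos_lt hμ (Finset.mem_filter_univ i |>.1 hi)) hsum
  exact hi.trans (mul_le_mul_of_nonpos_left (minPos_le (Finset.mem_filter_univ i |>.1 hiS))
    (sqrt_card_div_sub_one_nonpos hq))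

end Family

section PosSemidef

variable {n 𝕜 : Type*} [Fintype n] [DecidableEq n] [RCLike 𝕜] {A : Matrix n n 𝕜}

theorem rank_eq_card_pos_eigenvalues (hA : A.PosSemidef) :
    A.rank = Finset.card {i | 0 < hA.1.eigenvalues i} := by
  simp only [hA.1.rank_eq_card_non_zero_eigs, Fintype.card_subtype,
    (hA.eigenvalues_nonneg _).lt_iff_ne']

theorem stmt18_general (hA : A.PosSemidef) {q μ₀ : ℝ} (hq : A.rank < q)
    (hμ₀ : -minPos hA.1.eigenvalues < μ₀)
    (hsum : 1 = q⁻¹ * ∑ i with 0 < hA.1.eigenvalues i,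
      hA.1.eigenvalues i ^ 2 / (hA.1.eigenvalues i + μ₀) ^ 2) :
    (A.rank / q - 1) * (⨆ i, hA.1.eigenvalues i)
        < (√(A.rank / q) - 1) * (⨆ i, hA.1.eigenvalues i)
    ∧ (√(A.rank / q) - 1) * (⨆ i, hA.1.eigenvalues i) ≤ μ₀
    ∧ μ₀ ≤ (√(A.rank / q) - 1) * minPos hA.1.eigenvalues
    ∧ (√(A.rank / q) - 1) * minPos hA.1.eigenvalues < 0 := by
  rw [rank_eq_card_pos_eigenvalues hA] at hq ⊢
  set e := hA.1.eigenvalues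
  have hq0 : 0 < q := (Nat.cast_nonneg _).trans_lt hq
  have hsum_eq : ∑ i with 0 < e i, e i ^ 2 / (e i + μ₀) ^ 2 = q := by
    rw [eq_inv_mul_iff_mul_eq₀ hq0.ne', mul_one] at hsum
    exact hsum.symm
  have hpos : ∃ i, 0 < e i := by
    obtain ⟨i, hi, -⟩ := Finset.exists_ne_zero_of_sum_ne_zero (hsum_eq.trans_ne hq0.ne')
    exact ⟨i, Finset.mem_filter_univ i |>.1 hi⟩
  have hr : (Finset.card {i | 0 < e i} : ℝ) ≠ 0 := by
    simpa [Finset.filter_eq_empty_iff] using hpos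
  have hlt : Finset.card {i | 0 < e i} / q < 1 := (div_lt_one hq0).2 hq
  have hmax : 0 < ⨆ i, e i :=
    hpos.elim fun i hi ↦ hi.trans_le (le_ciSup (Set.finite_range e).bddAbove i)
  refine ⟨?_, sqrt_card_pos_div_sub_one_mul_iSup_le hpos hq.le hμ₀ hsum_eq.le,
    le_sqrt_card_pos_div_sub_one_mul_minPos hpos hq.le hμ₀ hsum_eq.ge, ?_⟩
  · gcongr
    exact Real.lt_sqrt_self_iff.2 ⟨div_ne_zero hr hq0.ne', hlt⟩
  · exact mul_neg_of_neg_of_pos (sub_neg.2 ((Real.sqrt_lt' one_pos).2 (by rwa [one_pow])))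
      (minPos_pos hpos)

end PosSemidef

/-- Bounds on `μ₀` for sketch size exceeding the rank (from the proof of Theorem 3.1):
`(p r(A)/q - 1) λ_max(A) < (√(p r(A)/q) - 1) λ_max(A) ≤ μ₀ ≤ (√(p r(A)/q) - 1) λ_min⁺(A)
< 0`. -/
theorem stmt18 {p : ℕ} (A : Matrix (Fin p) (Fin p) ℂ)
    (hA : A.PosSemidef) (hA0 : A ≠ 0)
    (q : ℕ) (hq : (A.rank : ℝ) < q) (μ₀ : ℝ)
    (hμ₀ : -(lminp hA.1) < μ₀ ∧ 1 = (q : ℝ)⁻¹ * specSum2 hA.1.eigenvalues μ₀) :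
    ((A.rank : ℝ) / q - 1) * (⨆ i, hA.1.eigenvalues i)
        < (Real.sqrt ((A.rank : ℝ) / q) - 1) * (⨆ i, hA.1.eigenvalues i)
    ∧ (Real.sqrt ((A.rank : ℝ) / q) - 1) * (⨆ i, hA.1.eigenvalues i) ≤ μ₀
    ∧ μ₀ ≤ (Real.sqrt ((A.rank : ℝ) / q) - 1) * lminp hA.1
    ∧ (Real.sqrt ((A.rank : ℝ) / q) - 1) * lminp hA.1 < 0 := by
  rw [specSum2, ← Finset.sum_filter] at hμ₀
  exact stmt18_general hA hq hμ₀.1 hμ₀.2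
end
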